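/- Let d_1,…,d_l be positive integers with d_1+⋯+d_l = n, and partition X_n into consecutive blocks X^{(1)},…,X^{(l)} with |X^{(i)}| = d_i. For each i let A_i be a core synchronous transducer on alphabet X^{(i)} synchronizing at level k_i, and define the synchronous transducer ⊔A_i on X_n with state set the disjoint union of the Q_{A_i}, where a state q ∈ Q_{A_j} transitions and outputs as in A_j on letters of X^{(j)}, while for x ∈ X^{(i)} with i ≠ j one sets π(x, q) = q_x and λ(x, q) = λ_{A_i}(x, q_x), q_x being the unique state of A_i with π_{A_i}(x, q_x) = q_x. Then: (i) ⊔A_i is synchronizing at level (max_i k_i) + 1; (ii) for core synchronous synchronizing transducers B_1,…,B_l on the same blocks, f_{⊔B_i} ∘ f_{⊔A_i} = f_{⊔C_i}, where C_i is the restriction of the product A_i * B_i to its core; (iii) if f_{⊔A_i} = f_{⊔B_i} then f_{A_i} = f_{B_i} for every i. Hence (A_1,…,A_l) ↦ f_{⊔A_i} defines an injective monoid homomorphism from the direct product of the monoids of maps induced by core synchronous synchronizing transducers on the X^{(i)} into the monoid of maps induced by core synchronous synchronizing transducers on X_n. -/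

import Mathlib

/-!
The map `f_T` of a synchronizing transducer `T` can be read off from any *run* of `T` along a
bi-infinite sequence `x`, that is, any `t : ℤ → Q` with `t (i + 1) = T.step (x i) (t i)`:
synchronization makes the run along `x` unique (`zmap_eq_of_isRun`), and the forced states form
one (`Synchronizing.exists_isRun`). All three parts then become local statements about single
letters.

* (i) A letter of block `b` takes every state of `⊔ A_i` into `A_b`. From there, two states of the
  same component either keep reading letters of block `b`, and merge because `A_b` synchronizes,
  or they meet a letter of another block, and merge at once (`sqcupT_stepW_alternative`).
* (ii) The projections from states of `⊔ C_i` to states of `⊔ A_i` and `⊔ B_i` carry a run of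
  `⊔ C_i` along `x` to a run of `⊔ A_i` along `x` and a run of `⊔ B_i` along `f_{⊔ A_i} x`. At a
  change of block this uses that a state of `A_i * B_i` fixed by `x` has components `q_x` and
  `q_y`, where `y` is the letter `A_i` writes on `x` at `q_x`. Working from `⊔ C_i` downwards
  means that membership in the core never has to be checked.
* (iii) A run of `A_i` along `x` is a run of `⊔ A_i` along the copy of `x` in block `i`, so
  `f_{⊔ A_i}` restricts to `f_{A_i}` on such sequences.
-/

/-- A synchronous transducer with alphabet `X` and state set `Q`:
`step x q` is the state reached after reading letter `x` at state `q`, and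
`out x q` is the letter written. -/
structure Transducer (X : Type*) (Q : Type*) where
  step : X → Q → Q
  out : X → Q → X

namespace Transducer

variable {X Q R : Type*}

/-- The transition function extended to words (read left to right). -/
def stepW (T : Transducer X Q) : List X → Q → Q
  | [], q => q
  | x :: w, q => T.stepW w (T.step x q)

/-- The output function extended to words. -/
def outW (T : Transducer X Q) : List X → Q → List X
  | [], _ => []
  | x :: w, q => T.out x q :: T.outW w (T.step x q)

theorem stepW_append (T : Transducer X Q) (u v : List X) (q : Q) :
    T.stepW (u ++ v) q = T.stepW v (T.stepW u q) := by
  induction u generalizing q with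
  | nil => rfl
  | cons x u ih => simpa [stepW] using ih (T.step x q)

/-- `T` is synchronizing at level `k`: the state reached after reading any word of
length `k` is independent of the starting state. -/
def Synchronizing (T : Transducer X Q) (k : ℕ) : Prop :=
  ∀ Γ : List X, Γ.length = k → ∀ p q : Q, T.stepW Γ p = T.stepW Γ q

/-- A state is in the core of `T` if it is forced by some nonempty word. -/
def InCore (T : Transducer X Q) (q : Q) : Prop :=
  ∃ Γ : List X, Γ ≠ [] ∧ ∀ p : Q, T.stepW Γ p = q

/-- `T` is core if every state is forced. -/
def IsCore (T : Transducer X Q) : Prop := ∀ q : Q, T.InCore q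

/-- The map on one-sided infinite sequences induced by the state `q`. -/
def stateMap (T : Transducer X Q) (q : Q) (x : ℕ → X) : ℕ → X :=
  fun i => T.out (x i) (T.stepW ((List.range i).map x) q)

/-- Every state of `T` is a homeomorphism state. -/
def AllHomeo (T : Transducer X Q) : Prop := ∀ q : Q, Function.Bijective (T.stateMap q)

/-- `T` is invertible: every state acts as a bijection on single letters. -/
def Invertible (T : Transducer X Q) : Prop :=
  ∀ q : Q, Function.Bijective fun x => T.out x q

/-- The map `f_T` on bi-infinite sequences induced by a transducer synchronizing at
level `k`; the letter at position `i` of the image is obtained by processing `x i`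
from the state reached after reading `x (i-k), …, x (i-1)` starting at the basepoint
state `q0` (when `T` is synchronizing at level `k` this is the forced state, and the
map does not depend on the choice of `q0`). -/
def zmap (T : Transducer X Q) (k : ℕ) (q0 : Q) (x : ℤ → X) : ℤ → X :=
  fun i => T.out (x i) (T.stepW ((List.range k).map fun j => x (i - (k : ℤ) + (j : ℤ))) q0)

/-- The composite map on one-sided sequences represented by a word of states,
applied leftmost letter first. -/
def wordMap (T : Transducer X Q) : List Q → (ℕ → X) → ℕ → X
  | [], x => x
  | q :: w, x => T.wordMap w (T.stateMap q x)

/-- A bi-infinite sequence is rational if it is eventually periodic in both directions. -/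
def IsRational (z : ℤ → X) : Prop :=
  ∃ (N p q : ℕ), 0 < p ∧ 0 < q ∧
    (∀ i : ℤ, (N : ℤ) ≤ i → z (i + (p : ℤ)) = z i) ∧
    (∀ i : ℤ, i ≤ -(N : ℤ) → z (i - (q : ℤ)) = z i)

/-- The inverse transducer of an invertible transducer. -/
noncomputable def invT (T : Transducer X Q) (hX : Nonempty X) : Transducer X Q where
  step := fun y q => T.step (@Function.invFun X X hX (fun x => T.out x q) y) q
  out := fun y q => @Function.invFun X X hX (fun x => T.out x q) y

/-- The product transducer `A*B`. -/
def prodT (T : Transducer X Q) (S : Transducer X R) : Transducer X (Q × R) where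
  step := fun x pq => (T.step x pq.1, S.step (T.out x pq.1) pq.2)
  out := fun x pq => S.out (T.out x pq.1) pq.2

/-- The `m`-fold power `A^m`, with state set `Q^m`. -/
def powT (T : Transducer X Q) : (m : ℕ) → Transducer X (Fin m → Q)
  | 0 => { step := fun _ u => u, out := fun x _ => x }
  | m + 1 =>
    { step := fun x u =>
        Fin.cons (T.step x (u 0)) ((T.powT m).step (T.out x (u 0)) fun i => u i.succ)
      out := fun x u => (T.powT m).out (T.out x (u 0)) fun i => u i.succ }

/-- The restriction of a transducer to its core. -/
def coreT (T : Transducer X Q) : Transducer X {q : Q // T.InCore q} where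
  step := fun x q =>
    ⟨T.step x q.1, by
      obtain ⟨Γ, hΓ, h⟩ := q.2
      exact ⟨Γ ++ [x], by simp, fun p => by rw [T.stepW_append, h p]; rfl⟩⟩
  out := fun x q => T.out x q.1

/-- `Γ_l^P`: the word obtained by passing `Γ` successively through the states in `P`. -/
def iterW (T : Transducer X Q) : List Q → List X → List X
  | [], Γ => Γ
  | p :: P, Γ => T.iterW P (T.outW Γ p)

/-- The list of states `out_i^P` reached when passing `Γ` successively through `P`. -/
def iterOuts (T : Transducer X Q) : List Q → List X → List Q
  | [], _ => []
  | p :: P, Γ => T.stepW Γ p :: T.iterOuts P (T.outW Γ p)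

/-- `((t :: Tt), (p :: Tp), Γ)` is a split (forced states computed from the
basepoint state `q0`). -/
def SplitCond (T : Transducer X Q) (q0 : Q) (t p : Q) (Tt Tp : List Q) (Γ : List X) : Prop :=
  Tt.length = Tp.length ∧
  T.iterOuts (t :: Tt) Γ = T.iterOuts (p :: Tp) Γ ∧
  (∀ i : ℕ, 1 ≤ i → i < (t :: Tt).length →
    T.stepW (T.iterW ((t :: Tt).take i) Γ) q0 = T.stepW (T.iterW ((p :: Tp).take i) Γ) q0) ∧
  T.stepW (T.iterW (t :: Tt) Γ) q0 ≠ T.stepW (T.iterW (p :: Tp) Γ) q0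

/-- The bottom of the split `((t :: Tt), (p :: Tp), Γ)` depends only on its top. -/
def DependsOnTop (T : Transducer X Q) (q0 : Q) (t p : Q) (Tt Tp : List Q) (Γ : List X) : Prop :=
  ∀ U U' : List Q, U.length = Tt.length → U'.length = Tp.length →
    T.iterOuts (t :: U) Γ = T.iterOuts (t :: Tt) Γ ∧
    T.iterOuts (p :: U') Γ = T.iterOuts (p :: Tp) Γ ∧
    T.stepW (T.iterW (t :: U) Γ) q0 = T.stepW (T.iterW (t :: Tt) Γ) q0 ∧
    T.stepW (T.iterW (p :: U') Γ) q0 = T.stepW (T.iterW (p :: Tp) Γ) q0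

/-- The edge relation of the graph of bad pairs `G_r(T)` (on unordered pairs of
states, modelled as subsets of `Q`). -/
def BadEdge (T : Transducer X Q) (q0 : Q) (r : ℕ) (v w : Set Q) : Prop :=
  ∃ (t p : Q) (Tt Tp : List Q) (Γ : List X), Γ.length = r ∧
    T.SplitCond q0 t p Tt Tp Γ ∧ T.DependsOnTop q0 t p Tt Tp Γ ∧
    v = {t, p} ∧
    w = {T.stepW (T.iterW (t :: Tt) Γ) q0, T.stepW (T.iterW (p :: Tp) Γ) q0}

/-- The `r` splitting length of `T`, as an extended natural number (`⊤` if no split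
at level `r` exists). -/
noncomputable def splittingLength (T : Transducer X Q) (q0 : Q) (r : ℕ) : ℕ∞ :=
  sInf {L : ℕ∞ | ∃ (t p : Q) (Tt Tp : List Q) (Γ : List X),
    Γ.length = r ∧ L = ((Tt.length + 1 : ℕ) : ℕ∞) ∧ T.SplitCond q0 t p Tt Tp Γ}

/-- The `i`-th rotation of a word. -/
def rotWord (i : ℕ) (Γ : List X) : List X :=
  Γ.drop (Γ.length - i) ++ Γ.take (Γ.length - i)

/-- A nonempty word is prime if it is not a proper power of a shorter word. -/
def IsPrimeWord (Γ : List X) : Prop :=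
  Γ ≠ [] ∧ ∀ (δ : List X) (m : ℕ), 2 ≤ m → Γ ≠ (List.replicate m δ).flatten

/-- The length of the orbit of `Γ` under `f`. -/
noncomputable def orbitLen (f : List X → List X) (Γ : List X) : ℕ :=
  (Set.range fun m : ℕ => f^[m] Γ).ncard

/-- The minimal `s ≥ 1` such that `f^[s] Γ` is a rotation of `Γ`
(for words of length `k`). -/
noncomputable def sigmaIdx (f : List X → List X) (k : ℕ) (Γ : List X) : ℕ :=
  sInf {s : ℕ | 1 ≤ s ∧ ∃ i < k, f^[s] Γ = rotWord i Γ}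

/-- The rotation index attained at the minimal exponent `sigmaIdx`. -/
noncomputable def rhoIdx (f : List X → List X) (k : ℕ) (Γ : List X) : ℕ :=
  sInf {i : ℕ | i < k ∧ f^[sigmaIdx f k Γ] Γ = rotWord i Γ}

end Transducer

/-- The disjoint-union transducer `⊔ A_i` on the alphabet `X_n`, partitioned by `e`
into blocks `X^{(i)}` of sizes `d i`: a state of `A_j` acts as in `A_j` on letters of
its own block, while a letter `x` of another block `i` is sent to the unique state
`qfix i x` of `A_i` with a loop labelled `x`, outputting as that state does. -/
def Transducer.sqcupT {n l : ℕ} {d : Fin l → ℕ} {Q : Fin l → Type*}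
    (e : ((i : Fin l) × Fin (d i)) ≃ Fin n)
    (A : ∀ i, Transducer (Fin (d i)) (Q i))
    (qfix : ∀ i, Fin (d i) → Q i) :
    Transducer (Fin n) ((i : Fin l) × Q i) where
  step := fun y s =>
    if h : (e.symm y).1 = s.1 then
      ⟨s.1, (A s.1).step (Fin.cast (congrArg d h) (e.symm y).2) s.2⟩
    else
      ⟨(e.symm y).1, qfix (e.symm y).1 (e.symm y).2⟩
  out := fun y s =>
    if h : (e.symm y).1 = s.1 then
      e ⟨s.1, (A s.1).out (Fin.cast (congrArg d h) (e.symm y).2) s.2⟩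
    else
      e ⟨(e.symm y).1, (A (e.symm y).1).out (e.symm y).2 (qfix (e.symm y).1 (e.symm y).2)⟩

namespace Transducer

/-! ### Runs along a bi-infinite sequence -/

section Runs

variable {X Q : Type*}

/-- `t` is a run of `T` along the bi-infinite sequence `x`: `t i` is the state in which the
letter `x i` is read. -/
def IsRun (T : Transducer X Q) (x : ℤ → X) (t : ℤ → Q) : Prop :=
  ∀ i : ℤ, t (i + 1) = T.step (x i) (t i)

theorem IsRun.stepW_window {T : Transducer X Q} {x : ℤ → X} {t : ℤ → Q} (ht : T.IsRun x t)
    (i : ℤ) (k : ℕ) :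
    T.stepW ((List.range k).map fun j : ℕ => x (i + (j : ℤ))) (t i) = t (i + k) := by
  induction k with
  | zero => simp [stepW]
  | succ k ih =>
    rw [List.range_succ, List.map_append, stepW_append, ih]
    simp only [List.map_cons, List.map_nil, stepW]
    rw [← ht]
    congr 1
    push_cast
    ring

/-- In the definition of `zmap` the bound variable ranges over the integers, so that the window of
positions is coerced to a list of integers; here it is a list of natural numbers. -/
theorem zmap_apply (T : Transducer X Q) (k : ℕ) (q0 : Q) (x : ℤ → X) (i : ℤ) :
    T.zmap k q0 x i = T.out (x i)
      (T.stepW ((List.range k).map fun j : ℕ => x (i - (k : ℤ) + (j : ℤ))) q0) := by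
  have hcast : (do let a ← List.range k; pure (a : ℤ)) =
      (List.range k).map (fun a : ℕ => (a : ℤ)) := by
    exact List.map_eq_flatMap.symm
  unfold zmap
  rw [hcast, List.map_map]
  rfl

theorem zmap_eq_of_isRun {T : Transducer X Q} {k : ℕ} (hT : T.Synchronizing k) (q0 : Q)
    {x : ℤ → X} {t : ℤ → Q} (ht : T.IsRun x t) (i : ℤ) :
    T.zmap k q0 x i = T.out (x i) (t i) := by
  have h := ht.stepW_window (i - k) k
  rw [sub_add_cancel] at h
  rw [zmap_apply, hT _ (by simp) q0 (t (i - k)), h]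

theorem Synchronizing.exists_isRun {T : Transducer X Q} {k : ℕ} (hT : T.Synchronizing k) (q0 : Q)
    (x : ℤ → X) : ∃ t, T.IsRun x t := by
  refine ⟨fun i => T.stepW ((List.range k).map fun j : ℕ => x (i - (k : ℤ) + (j : ℤ))) q0,
    fun i => ?_⟩
  -- Read the `k + 1` letters from position `i - k` to `i`, splitting off the last or the first.
  have h1 : T.stepW ((List.range (k + 1)).map fun j : ℕ => x (i - (k : ℤ) + (j : ℤ))) q0 =
      T.step (x i) (T.stepW ((List.range k).map fun j : ℕ => x (i - (k : ℤ) + (j : ℤ))) q0) := by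
    rw [List.range_succ, List.map_append, stepW_append]
    simp [stepW]
  have h2 : T.stepW ((List.range (k + 1)).map fun j : ℕ => x (i - (k : ℤ) + (j : ℤ))) q0 =
      T.stepW ((List.range k).map fun j : ℕ => x (i + 1 - (k : ℤ) + (j : ℤ)))
        (T.step (x (i - k)) q0) := by
    rw [List.range_succ_eq_map]
    simp only [List.map_cons, List.map_map, stepW, Nat.cast_zero, add_zero]
    congr 1
    apply List.map_congr_left
    intro j _
    simp only [Function.comp_apply]
    congr 1
    push_cast
    ring
  dsimp only
  rw [← h1, h2]
  exact hT _ (by simp) _ _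

theorem Synchronizing.mono {T : Transducer X Q} {k m : ℕ} (hT : T.Synchronizing k)
    (hkm : k ≤ m) : T.Synchronizing m := by
  intro Γ hΓ p q
  -- The last `k` letters already force the state.
  rw [← List.take_append_drop (m - k) Γ, stepW_append, stepW_append]
  exact hT _ (by simp [hΓ]; omega) _ _

theorem Synchronizing.fixed_unique {T : Transducer X Q} {k : ℕ} (hT : T.Synchronizing k) {x : X}
    {p q : Q} (hp : T.step x p = p) (hq : T.step x q = q) : p = q := by
  have key : ∀ r, T.step x r = r → ∀ m, T.stepW (List.replicate m x) r = r := by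
    intro r hr m
    induction m with
    | zero => rfl
    | succ m ih => rw [List.replicate_succ, stepW, hr, ih]
  rw [← key p hp k, ← key q hq k]
  exact hT _ (by simp) _ _

end Runs

/-! ### Synchronization of products and cores -/

section Products

variable {X Q R : Type*}

theorem outW_length (T : Transducer X Q) (Γ : List X) (q : Q) :
    (T.outW Γ q).length = Γ.length := by
  induction Γ generalizing q with
  | nil => rfl
  | cons x Γ ih => simp [outW, ih]

theorem prodT_stepW (T : Transducer X Q) (S : Transducer X R) (Γ : List X) (p : Q × R) :
    (T.prodT S).stepW Γ p = (T.stepW Γ p.1, S.stepW (T.outW Γ p.1) p.2) := by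
  induction Γ generalizing p with
  | nil => rfl
  | cons x Γ ih => rw [stepW, ih]; rfl

theorem Synchronizing.prodT {T : Transducer X Q} {S : Transducer X R} {k m : ℕ}
    (hT : T.Synchronizing k) (hS : S.Synchronizing m) : (T.prodT S).Synchronizing (k + m) := by
  intro Γ hΓ p q
  rw [← List.take_append_drop k Γ, stepW_append, stepW_append, prodT_stepW, prodT_stepW,
    prodT_stepW, prodT_stepW]
  -- After `k` letters the first coordinates agree, so the second factor then reads the same word.
  have h1 : T.stepW (Γ.take k) p.1 = T.stepW (Γ.take k) q.1 := hT _ (by simp [hΓ]) _ _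
  dsimp only
  rw [h1]
  congr 1
  exact hS _ (by simp [outW_length, hΓ]) _ _

theorem coreT_stepW (T : Transducer X Q) (Γ : List X) (q : {q : Q // T.InCore q}) :
    (T.coreT.stepW Γ q).1 = T.stepW Γ q.1 := by
  induction Γ generalizing q with
  | nil => rfl
  | cons x Γ ih => simp only [stepW, ih]; rfl

theorem Synchronizing.coreT {T : Transducer X Q} {k : ℕ} (hT : T.Synchronizing k) :
    T.coreT.Synchronizing k := by
  intro Γ hΓ p q
  apply Subtype.ext
  rw [coreT_stepW, coreT_stepW]
  exact hT _ hΓ _ _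

end Products

/-! ### The disjoint-union transducer -/

section Sqcup

variable {n l : ℕ} {d : Fin l → ℕ} {Q : Fin l → Type*}
  (e : ((i : Fin l) × Fin (d i)) ≃ Fin n) (A : ∀ i, Transducer (Fin (d i)) (Q i))
  (qfix : ∀ i, Fin (d i) → Q i)

/-- The defining formula of `⊔ A_i`, with the letter given by its block and its place there. -/
theorem sqcupT_step_apply (s : (i : Fin l) × Fin (d i)) (t : (i : Fin l) × Q i) :
    (sqcupT e A qfix).step (e s) t =
      if h : s.1 = t.1 then ⟨t.1, (A t.1).step (Fin.cast (congrArg d h) s.2) t.2⟩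
      else ⟨s.1, qfix s.1 s.2⟩ := by
  obtain ⟨y, rfl⟩ := e.symm.surjective s
  rw [e.apply_symm_apply]
  rfl

theorem sqcupT_out_apply (s : (i : Fin l) × Fin (d i)) (t : (i : Fin l) × Q i) :
    (sqcupT e A qfix).out (e s) t =
      if h : s.1 = t.1 then e ⟨t.1, (A t.1).out (Fin.cast (congrArg d h) s.2) t.2⟩
      else e ⟨s.1, (A s.1).out s.2 (qfix s.1 s.2)⟩ := by
  obtain ⟨y, rfl⟩ := e.symm.surjective s
  rw [e.apply_symm_apply]
  rfl

theorem sqcupT_step_same (b : Fin l) (c : Fin (d b)) (p : Q b) :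
    (sqcupT e A qfix).step (e ⟨b, c⟩) ⟨b, p⟩ = ⟨b, (A b).step c p⟩ := by
  rw [sqcupT_step_apply, dif_pos rfl]
  rfl

theorem sqcupT_out_same (b : Fin l) (c : Fin (d b)) (p : Q b) :
    (sqcupT e A qfix).out (e ⟨b, c⟩) ⟨b, p⟩ = e ⟨b, (A b).out c p⟩ := by
  rw [sqcupT_out_apply, dif_pos rfl]
  rfl

theorem sqcupT_step_ne {b b' : Fin l} (h : b' ≠ b) (c : Fin (d b')) (p : Q b) :
    (sqcupT e A qfix).step (e ⟨b', c⟩) ⟨b, p⟩ = ⟨b', qfix b' c⟩ := by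
  rw [sqcupT_step_apply, dif_neg h]

theorem sqcupT_out_ne {b b' : Fin l} (h : b' ≠ b) (c : Fin (d b')) (p : Q b) :
    (sqcupT e A qfix).out (e ⟨b', c⟩) ⟨b, p⟩ = e ⟨b', (A b').out c (qfix b' c)⟩ := by
  rw [sqcupT_out_apply, dif_neg h]

theorem sqcupT_step_block (b : Fin l) (c : Fin (d b)) (s : (i : Fin l) × Q i) :
    ∃ p : Q b, (sqcupT e A qfix).step (e ⟨b, c⟩) s = ⟨b, p⟩ := by
  obtain ⟨b', p⟩ := s
  by_cases h : b = b'
  · subst h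
    exact ⟨_, sqcupT_step_same ..⟩
  · exact ⟨_, sqcupT_step_ne e A qfix h c p⟩

/-- Two states of the component `A_b` are merged by a word over `X_n` as soon as it leaves block
`b`; a word that stays in block `b` acts on them as a word of the same length over that block. -/
theorem sqcupT_stepW_alternative (u : List (Fin n)) (b : Fin l) (p p' : Q b) :
    (sqcupT e A qfix).stepW u ⟨b, p⟩ = (sqcupT e A qfix).stepW u ⟨b, p'⟩ ∨
    ∃ w : List (Fin (d b)), w.length = u.length ∧
      (sqcupT e A qfix).stepW u ⟨b, p⟩ = ⟨b, (A b).stepW w p⟩ ∧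
      (sqcupT e A qfix).stepW u ⟨b, p'⟩ = ⟨b, (A b).stepW w p'⟩ := by
  induction u generalizing p p' with
  | nil => exact Or.inr ⟨[], rfl, rfl, rfl⟩
  | cons y u ih =>
    obtain ⟨⟨b', c⟩, rfl⟩ := e.surjective y
    simp only [stepW]
    by_cases h : b' = b
    · subst h
      rw [sqcupT_step_same, sqcupT_step_same]
      rcases ih ((A b').step c p) ((A b').step c p') with h | ⟨w, hw, h1, h2⟩
      · exact Or.inl h
      · exact Or.inr ⟨c :: w, by simp [hw], h1, h2⟩
    · left
      rw [sqcupT_step_ne e A qfix h, sqcupT_step_ne e A qfix h]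

theorem sqcupT_synchronizing {k : Fin l → ℕ} (hA : ∀ i, (A i).Synchronizing (k i)) :
    (sqcupT e A qfix).Synchronizing (Finset.univ.sup k + 1) := by
  intro Γ hΓ s s'
  obtain _ | ⟨y, u⟩ := Γ
  · simp at hΓ
  obtain ⟨⟨b, c⟩, rfl⟩ := e.surjective y
  obtain ⟨p, hp⟩ := sqcupT_step_block e A qfix b c s
  obtain ⟨p', hp'⟩ := sqcupT_step_block e A qfix b c s'
  simp only [stepW, hp, hp']
  rcases sqcupT_stepW_alternative e A qfix u b p p' with h | ⟨w, hw, h1, h2⟩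
  · exact h
  · have hwlen : w.length = Finset.univ.sup k := hw.trans (Nat.succ.inj hΓ)
    have hmerge := (hA b).mono (Finset.le_sup (Finset.mem_univ b)) w hwlen p p'
    rw [h1, h2, hmerge]

/-- On sequences in a single block `b`, the map `f_{⊔ A_i}` is a copy of `f_{A_b}`. -/
theorem sqcupT_zmap_block {k : Fin l → ℕ} (hA : ∀ i, (A i).Synchronizing (k i))
    (s : (i : Fin l) × Q i) (b : Fin l) (q : Q b) (x : ℤ → Fin (d b)) (i : ℤ) :
    (sqcupT e A qfix).zmap (Finset.univ.sup k + 1) s (fun j => e ⟨b, x j⟩) i =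
      e ⟨b, (A b).zmap (k b) q x i⟩ := by
  obtain ⟨t, ht⟩ := (hA b).exists_isRun q x
  have hrun : (sqcupT e A qfix).IsRun (fun j => e ⟨b, x j⟩) (fun j => ⟨b, t j⟩) := by
    intro j
    rw [sqcupT_step_same, ← ht j]
  rw [zmap_eq_of_isRun (sqcupT_synchronizing e A qfix hA) s hrun, sqcupT_out_same,
    zmap_eq_of_isRun (hA b) q ht]

end Sqcup

/-! ### Composition of disjoint-union transducers -/

section Composition

variable {n l : ℕ} {d : Fin l → ℕ} {QA QB : Fin l → Type*}
  (e : ((i : Fin l) × Fin (d i)) ≃ Fin n)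
  {A : ∀ i, Transducer (Fin (d i)) (QA i)} {B : ∀ i, Transducer (Fin (d i)) (QB i)}

/-- The state of `⊔ A_i` underlying a state of `⊔ C_i`, where `C_i` is the core of `A_i * B_i`. -/
def projA (s : (i : Fin l) × {q : QA i × QB i // ((A i).prodT (B i)).InCore q}) :
    (i : Fin l) × QA i := ⟨s.1, s.2.1.1⟩

/-- The state of `⊔ B_i` underlying a state of `⊔ C_i`, where `C_i` is the core of `A_i * B_i`. -/
def projB (s : (i : Fin l) × {q : QA i × QB i // ((A i).prodT (B i)).InCore q}) :
    (i : Fin l) × QB i := ⟨s.1, s.2.1.2⟩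

/-- One step of `⊔ C_i` is a step of `⊔ A_i` followed by a step of `⊔ B_i` on the letter written.
The hypotheses on `qC` say that it pairs `q_x` with `q_y`, where `y` is the letter `A_i` writes
on `x` at `q_x`. -/
theorem sqcupT_core_step (qA : ∀ i, Fin (d i) → QA i) (qB : ∀ i, Fin (d i) → QB i)
    (qC : ∀ i, Fin (d i) → {q : QA i × QB i // ((A i).prodT (B i)).InCore q})
    (h1 : ∀ i x, (qC i x).1.1 = qA i x)
    (h2 : ∀ i x, (qC i x).1.2 = qB i ((A i).out x (qA i x)))
    (y : Fin n) (s : (i : Fin l) × {q : QA i × QB i // ((A i).prodT (B i)).InCore q}) :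
    projA ((sqcupT e (fun i => ((A i).prodT (B i)).coreT) qC).step y s) =
      (sqcupT e A qA).step y (projA s) ∧
    projB ((sqcupT e (fun i => ((A i).prodT (B i)).coreT) qC).step y s) =
      (sqcupT e B qB).step ((sqcupT e A qA).out y (projA s)) (projB s) ∧
    (sqcupT e (fun i => ((A i).prodT (B i)).coreT) qC).out y s =
      (sqcupT e B qB).out ((sqcupT e A qA).out y (projA s)) (projB s) := by
  obtain ⟨⟨b', c⟩, rfl⟩ := e.surjective y
  obtain ⟨b, p⟩ := s
  by_cases h : b' = b
  · subst h
    rw [sqcupT_step_same, sqcupT_out_same]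
    simp only [projA, projB]
    rw [sqcupT_step_same, sqcupT_out_same, sqcupT_step_same, sqcupT_out_same]
    exact ⟨rfl, rfl, rfl⟩
  · have e1 := h1 b' c
    have e2 := h2 b' c
    rw [sqcupT_step_ne _ _ _ h, sqcupT_out_ne _ _ _ h]
    simp only [projA, projB]
    rw [sqcupT_step_ne _ _ _ h, sqcupT_out_ne _ _ _ h, sqcupT_step_ne _ _ _ h,
      sqcupT_out_ne _ _ _ h]
    refine ⟨by rw [e1], by rw [e2], ?_⟩
    simp only [coreT, prodT]
    rw [e1, e2]

end Composition

end Transducer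

/-- Let `d_1, …, d_l` be positive integers summing to `n` and partition
`X_n` into consecutive blocks of sizes `d_i` (via the equivalence `e`).  For core
synchronous synchronizing transducers `A_i` on the blocks: (i) `⊔A_i` is synchronizing
at level `(max_i k_i) + 1`; (ii) `f_{⊔B_i} ∘ f_{⊔A_i} = f_{⊔C_i}` where `C_i` is the
restriction of `A_i * B_i` to its core; (iii) if `f_{⊔A_i} = f_{⊔B_i}` then
`f_{A_i} = f_{B_i}` for every `i`.  (Hence `(A_i)_i ↦ f_{⊔A_i}` is an injective monoid
homomorphism.) -/
theorem sqcup_embedding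
    (n l : ℕ) (hn : 2 ≤ n) (hl : 1 ≤ l)
    (d : Fin l → ℕ) (hd : ∀ i, 0 < d i) (hsum : ∑ i, d i = n)
    {QA QB : Fin l → Type*} [∀ i, Fintype (QA i)] [∀ i, Fintype (QB i)]
    (e : ((i : Fin l) × Fin (d i)) ≃ Fin n)
    (he : ∀ s : (i : Fin l) × Fin (d i),
      ((e s : Fin n) : ℕ) = (∑ j ∈ Finset.univ.filter fun j => j < s.1, d j) + (s.2 : ℕ))
    (A : ∀ i, Transducer (Fin (d i)) (QA i))
    (B : ∀ i, Transducer (Fin (d i)) (QB i))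
    (kA kB : Fin l → ℕ)
    (hAcore : ∀ i, (A i).IsCore) (hAsync : ∀ i, (A i).Synchronizing (kA i))
    (hBcore : ∀ i, (B i).IsCore) (hBsync : ∀ i, (B i).Synchronizing (kB i))
    (qfixA : ∀ i, Fin (d i) → QA i)
    (hqfixA : ∀ i x, (A i).step x (qfixA i x) = qfixA i x)
    (qfixB : ∀ i, Fin (d i) → QB i)
    (hqfixB : ∀ i x, (B i).step x (qfixB i x) = qfixB i x)
    (qfixC : ∀ i, Fin (d i) → {q : QA i × QB i // ((A i).prodT (B i)).InCore q})
    (hqfixC : ∀ i x, ((A i).prodT (B i)).coreT.step x (qfixC i x) = qfixC i x)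
    (a0 : (i : Fin l) × QA i) (b0 : (i : Fin l) × QB i)
    (c0 : (i : Fin l) × {q : QA i × QB i // ((A i).prodT (B i)).InCore q}) :
    (Transducer.sqcupT e A qfixA).Synchronizing (Finset.univ.sup kA + 1) ∧
    ((Transducer.sqcupT e B qfixB).zmap (Finset.univ.sup kB + 1) b0 ∘
        (Transducer.sqcupT e A qfixA).zmap (Finset.univ.sup kA + 1) a0 =
      (Transducer.sqcupT e (fun i => ((A i).prodT (B i)).coreT) qfixC).zmap
        (Finset.univ.sup (fun i => kA i + kB i) + 1) c0) ∧
    ((Transducer.sqcupT e A qfixA).zmap (Finset.univ.sup kA + 1) a0 =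
        (Transducer.sqcupT e B qfixB).zmap (Finset.univ.sup kB + 1) b0 →
      ∀ (i : Fin l) (ai : QA i) (bi : QB i),
        (A i).zmap (kA i) ai = (B i).zmap (kB i) bi) := by
  have hC : ∀ i, ((A i).prodT (B i)).coreT.Synchronizing (kA i + kB i) :=
    fun i => ((hAsync i).prodT (hBsync i)).coreT
  have hSA := Transducer.sqcupT_synchronizing e A qfixA hAsync
  have hSB := Transducer.sqcupT_synchronizing e B qfixB hBsync
  have hSC := Transducer.sqcupT_synchronizing e _ qfixC hC
  refine ⟨hSA, ?_, ?_⟩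
  · have h1 : ∀ i x, (qfixC i x).1.1 = qfixA i x := fun i x =>
      (hAsync i).fixed_unique
        (congrArg (fun q => q.1.1) (hqfixC i x)) (hqfixA i x)
    have h2 : ∀ i x, (qfixC i x).1.2 = qfixB i ((A i).out x (qfixA i x)) := by
      intro i x
      rw [← h1 i x]
      exact (hBsync i).fixed_unique
        (congrArg (fun q => q.1.2) (hqfixC i x)) (hqfixB i _)
    have hstep := Transducer.sqcupT_core_step e qfixA qfixB qfixC h1 h2
    funext x
    obtain ⟨t, ht⟩ := hSC.exists_isRun c0 x
    have htA : (Transducer.sqcupT e A qfixA).IsRun x (fun j => Transducer.projA (t j)) := by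
      intro j
      dsimp only
      rw [ht j]
      exact (hstep _ _).1
    have hy := Transducer.zmap_eq_of_isRun hSA a0 htA
    have htB : (Transducer.sqcupT e B qfixB).IsRun
        ((Transducer.sqcupT e A qfixA).zmap (Finset.univ.sup kA + 1) a0 x)
        (fun j => Transducer.projB (t j)) := by
      intro j
      dsimp only
      rw [ht j, hy j]
      exact (hstep _ _).2.1
    funext j
    rw [Function.comp_apply, Transducer.zmap_eq_of_isRun hSB b0 htB,
      Transducer.zmap_eq_of_isRun hSC c0 ht, hy j]
    exact (hstep _ _).2.2.symm
  · intro h i ai bi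
    funext x j
    have hx := congrFun (congrFun h fun m => e ⟨i, x m⟩) j
    rw [Transducer.sqcupT_zmap_block e A qfixA hAsync a0 i ai,
      Transducer.sqcupT_zmap_block e B qfixB hBsync b0 i bi] at hx
    exact eq_of_heq (Sigma.mk.inj (e.injective hx)).2
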